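/- arXiv:1603.04558 — 2 statements merged into one kernel-verified Lean document; each statement's English description precedes it below -/
import Mathlib

section
/- For $a, b > 0$, Watson's formula holds with the third upper and second lower parameters specialized: $2 B(a,b)\,{}_3F_2\left(a, b, \tfrac{a+b-1}{2}; a+b, \tfrac{a+b+1}{2}; 1\right) = \psi\left(\tfrac{a+1}{2}\right) + \psi\left(\tfrac{b+1}{2}\right) - \psi\left(\tfrac{a}{2}\right) - \psi\left(\tfrac{b}{2}\right)$. -/
open Finset

/-- Pochhammer (rising factorial) symbol `(x)_n`. -/
noncomputable def poch (x : ℝ) (n : ℕ) : ℝ := ∏ k ∈ Finset.range n, (x + k)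

/-- Generalized hypergeometric series ₃F₂. -/
noncomputable def F32 (a₁ a₂ a₃ b₁ b₂ z : ℝ) : ℝ :=
  ∑' n : ℕ, (poch a₁ n * poch a₂ n * poch a₃ n) /
    (poch b₁ n * poch b₂ n * n.factorial) * z ^ n

/-- Beta function. -/
noncomputable def Beta (a b : ℝ) : ℝ := Real.Gamma a * Real.Gamma b / Real.Gamma (a + b)

/-- Digamma function `ψ = Γ'/Γ`. -/
noncomputable def digamma (x : ℝ) : ℝ := deriv Real.Gamma x / Real.Gamma x

lemma poch_s (x : ℝ) (n : ℕ) : poch x (n+1) = poch x n * (x + n) := by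
  simp [poch, Finset.prod_range_succ]

lemma poch_s' (x : ℝ) (n : ℕ) : poch x (n+1) = x * poch (x+1) n := by
  simp only [poch, Finset.prod_range_succ']
  rw [mul_comm]
  congr 1
  · simp
  · apply Finset.prod_congr rfl
    intro k _
    push_cast; ring

lemma poch_pos (x : ℝ) (hx : 0 < x) (n : ℕ) : 0 < poch x n := by
  apply Finset.prod_pos
  intro k _
  positivity

lemma poch_ratio (c : ℝ) (n : ℕ) : poch c n * (c + n) = c * poch (c+1) n := by
  rw [← poch_s, poch_s']

lemma Beta_pos (a b : ℝ) (ha : 0 < a) (hb : 0 < b) : 0 < Beta a b := by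
  have h1 := Real.Gamma_pos_of_pos ha
  have h2 := Real.Gamma_pos_of_pos hb
  have h3 := Real.Gamma_pos_of_pos (add_pos ha hb)
  unfold Beta; positivity

lemma Beta_s (a b : ℝ) (ha : 0 < a) (hb : 0 < b) :
    Beta (a+1) (b+1) = a * b / ((a+b) * (a+b+1)) * Beta a b := by
  have h3 := Real.Gamma_pos_of_pos (add_pos ha hb)
  unfold Beta
  rw [show a + 1 + (b + 1) = (a+b+1)+1 by ring, Real.Gamma_add_one ha.ne', Real.Gamma_add_one hb.ne',
    Real.Gamma_add_one (by positivity), Real.Gamma_add_one (by positivity)]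
  field_simp

noncomputable def UU (a b : ℝ) (n : ℕ) : ℝ :=
  Beta a b * ((poch a n * poch b n) / (poch (a+b) n * n.factorial))

noncomputable def EE (a b : ℝ) (n : ℕ) : ℝ := UU a b n * ((a+b)/(a+b+n))

noncomputable def TT (a b : ℝ) (n : ℕ) : ℝ :=
  UU a b n * (poch ((a+b-1)/2) n / poch ((a+b+1)/2) n)

lemma UU_pos (a b : ℝ) (ha : 0 < a) (hb : 0 < b) (n : ℕ) : 0 < UU a b n := by
  have h0 := Beta_pos a b ha hb
  have h1 := poch_pos a ha n
  have h2 := poch_pos b hb n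
  have h3 := poch_pos (a+b) (add_pos ha hb) n
  unfold UU; positivity

lemma EE_pos (a b : ℝ) (ha : 0 < a) (hb : 0 < b) (n : ℕ) : 0 < EE a b n := by
  have h0 := UU_pos a b ha hb n
  unfold EE; positivity

lemma UU_s (a b : ℝ) (ha : 0 < a) (hb : 0 < b) (n : ℕ) :
    UU a b (n+1) = UU a b n * ((a+n)*(b+n)/((a+b+n)*(n+1))) := by
  have h3 := poch_pos (a+b) (add_pos ha hb) n
  unfold UU
  rw [poch_s, poch_s, poch_s, Nat.factorial_succ]
  have : (0:ℝ) < a + b + n := by positivity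
  push_cast
  field_simp

lemma UU_shift (a b : ℝ) (ha : 0 < a) (hb : 0 < b) (n : ℕ) :
    UU (a+1) (b+1) n = UU a b (n+1) * ((n+1)/(a+b+n+1)) := by
  have h3 := poch_pos (a+b+1) (by positivity) n
  have h4 := poch_pos (a+b+2) (by positivity) n
  have h5 := poch_ratio (a+b+1) n
  unfold UU
  rw [poch_s', poch_s', poch_s', Nat.factorial_succ, Beta_s a b ha hb,
    show a + 1 + (b+1) = a+b+2 by ring]
  rw [show a + b + 1 + 1 = a+b+2 by ring] at h5
  have h6 : poch (a+b+2) n = poch (a+b+1) n * (a+b+1+n) / (a+b+1) := by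
    rw [h5]; field_simp
  rw [h6]
  push_cast
  have : (0:ℝ) < a + b + n + 1 := by positivity
  have : (0:ℝ) < a + b + 1 + n := by positivity
  field_simp
  ring

lemma EE_partial (a b : ℝ) (ha : 0 < a) (hb : 0 < b) (n : ℕ) :
    ∑ k ∈ Finset.range n, EE a b k = (a+b)/(a*b) * (n * UU a b n) := by
  induction n with
  | zero => simp
  | succ n ih =>
    rw [Finset.sum_range_succ, ih, UU_s a b ha hb, EE]
    have : (0:ℝ) < a + b + n := by positivity
    push_cast
    field_simp
    ring

lemma poch_GammaSeq (a : ℝ) (ha : 0 < a) (n : ℕ) (hn : 0 < n) :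
    poch a (n+1) = (n:ℝ)^a * n.factorial / Real.GammaSeq a n := by
  have h : poch a (n+1) ≠ 0 := (poch_pos a ha _).ne'
  have h1 : (n:ℝ)^a ≠ 0 := by positivity
  have h2 : (n.factorial:ℝ) ≠ 0 := by positivity
  have h3 : Real.GammaSeq a n = (n:ℝ)^a * n.factorial / poch a (n+1) := rfl
  rw [h3]
  field_simp

lemma vv_lim (a b : ℝ) (ha : 0 < a) (hb : 0 < b) :
    Filter.Tendsto (fun n : ℕ => (n:ℝ) * UU a b n) Filter.atTop (nhds 1) := by
  rw [← Filter.tendsto_add_atTop_iff_nat 1]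
  have ga := Real.Gamma_pos_of_pos ha
  have gb := Real.Gamma_pos_of_pos hb
  have gs := Real.Gamma_pos_of_pos (add_pos ha hb)
  have h : Filter.Tendsto (fun n : ℕ => Beta a b * (Real.GammaSeq (a+b) n /
      (Real.GammaSeq a n * Real.GammaSeq b n))) Filter.atTop
      (nhds (Beta a b * (Real.Gamma (a+b) / (Real.Gamma a * Real.Gamma b)))) :=
    (((Real.GammaSeq_tendsto_Gamma (a+b)).div
      ((Real.GammaSeq_tendsto_Gamma a).mul (Real.GammaSeq_tendsto_Gamma b)) (by positivity))).const_mul _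
  have e : Beta a b * (Real.Gamma (a+b) / (Real.Gamma a * Real.Gamma b)) = 1 := by
    unfold Beta; field_simp
  rw [e] at h
  refine h.congr' ?_
  filter_upwards [Filter.eventually_gt_atTop 0] with n hn
  have hn' : (0:ℝ) < n := by exact_mod_cast hn
  unfold UU
  have pa := poch_pos a ha (n+1)
  have pb := poch_pos b hb (n+1)
  have ps := poch_pos (a+b) (add_pos ha hb) (n+1)
  have h2 : (0:ℝ) < n.factorial := by positivity
  have h1 : (0:ℝ) < (n:ℝ)^a := by positivity
  have h1' : (0:ℝ) < (n:ℝ)^b := by positivity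
  have e1 : ∀ x, Real.GammaSeq x n = (n:ℝ)^x * n.factorial / poch x (n+1) := fun _ => rfl
  rw [e1, e1, e1, Real.rpow_add hn', Nat.factorial_succ]
  push_cast
  field_simp

lemma EE_hasSum (a b : ℝ) (ha : 0 < a) (hb : 0 < b) : HasSum (EE a b) (1/a+1/b) := by
  rw [hasSum_iff_tendsto_nat_of_nonneg (fun n => (EE_pos a b ha hb n).le)]
  simp_rw [EE_partial a b ha hb]
  have := (vv_lim a b ha hb).const_mul ((a+b)/(a*b))
  convert this using 2
  field_simp
  ring

lemma ratio_eq (a b : ℝ) (ha : 0 < a) (hb : 0 < b) (n : ℕ) (h : (a+b-1)/2 + n ≠ 0) :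
    poch ((a+b-1)/2) n / poch ((a+b+1)/2) n = (a+b-1)/2 / ((a+b-1)/2 + n) := by
  have h1 := poch_ratio ((a+b-1)/2) n
  rw [show (a+b-1)/2+1 = (a+b+1)/2 by ring] at h1
  have h2 := poch_pos ((a+b+1)/2) (by positivity) n
  rw [div_eq_div_iff h2.ne' h]
  exact h1

lemma TT_zero (a b : ℝ) (ha : 0 < a) (hb : 0 < b) : TT a b 0 = EE a b 0 := by
  have : 0 < a + b := by positivity
  simp [TT, EE, poch, this.ne']

lemma TT_s (a b : ℝ) (ha : 0 < a) (hb : 0 < b) (n : ℕ) :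
    TT a b (n+1) + TT (a+1) (b+1) n = EE a b (n+1) := by
  have hn : (0:ℝ) ≤ n := by positivity
  have h1 : (a+b-1)/2 + ((n+1 : ℕ):ℝ) ≠ 0 := by push_cast; apply ne_of_gt; linarith
  have h2 : (a+1+(b+1)-1)/2 + (n:ℝ) ≠ 0 := by apply ne_of_gt; linarith
  unfold TT EE
  rw [UU_shift a b ha hb, ratio_eq a b ha hb _ h1, ratio_eq _ _ (by positivity) (by positivity) _ h2]
  have h3 : a + b + n + 1 ≠ 0 := by positivity
  have h3' : a + b + (n + 1) ≠ 0 := by positivity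
  have h4 : a + b - 1 + 2 * (n+1) ≠ 0 := by apply ne_of_gt; linarith
  have e1 : (a+b-1)/2 / ((a+b-1)/2 + ((n+1 : ℕ):ℝ)) = (a+b-1)/(a + b - 1 + 2 * (n+1)) := by
    rw [div_eq_div_iff h1 h4]; push_cast; ring
  have e2 : (a+1+(b+1)-1)/2 / ((a+1+(b+1)-1)/2 + (n:ℝ)) = (a+b+1)/(a + b - 1 + 2 * (n+1)) := by
    rw [div_eq_div_iff h2 h4]; ring
  rw [e1, e2, mul_assoc, ← mul_add]
  congr 1
  push_cast
  rw [show a + b + ((n:ℝ)+1) = a+b+n+1 by ring]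
  field_simp
  ring

lemma TT_bounds (a b : ℝ) (ha : 0 < a) (hb : 0 < b) (hc : 1 < a + b) (n : ℕ) :
    0 ≤ TT a b n ∧ TT a b n ≤ EE a b n := by
  have hn : (0:ℝ) ≤ n := by positivity
  have hU := UU_pos a b ha hb n
  have hc' : 0 < (a+b-1)/2 := by linarith
  unfold TT EE
  rw [ratio_eq a b ha hb n (by positivity)]
  refine ⟨by positivity, ?_⟩
  apply mul_le_mul_of_nonneg_left _ hU.le
  rw [div_le_div_iff₀ (by positivity) (by positivity)]
  nlinarith

lemma TT_summable' (a b : ℝ) (ha : 0 < a) (hb : 0 < b) (hc : 1 < a + b) : Summable (TT a b) :=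
  Summable.of_nonneg_of_le (fun n => (TT_bounds a b ha hb hc n).1)
    (fun n => (TT_bounds a b ha hb hc n).2) (EE_hasSum a b ha hb).summable

lemma TT_summable (a b : ℝ) (ha : 0 < a) (hb : 0 < b) : Summable (TT a b) := by
  rw [← summable_nat_add_iff 1]
  have h1 := (summable_nat_add_iff 1).2 (EE_hasSum a b ha hb).summable
  have h2 := TT_summable' (a+1) (b+1) (by positivity) (by positivity) (by linarith)
  refine (h1.sub h2).congr ?_
  intro n
  rw [← TT_s a b ha hb]; ring

lemma TT_rec (a b : ℝ) (ha : 0 < a) (hb : 0 < b) :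
    ∑' n, TT a b n + ∑' n, TT (a+1) (b+1) n = 1/a+1/b := by
  rw [← (EE_hasSum a b ha hb).tsum_eq, (TT_summable a b ha hb).tsum_eq_zero_add,
    (EE_hasSum a b ha hb).summable.tsum_eq_zero_add, TT_zero a b ha hb, add_assoc,
    ← Summable.tsum_add ((summable_nat_add_iff 1).2 (TT_summable a b ha hb))
      (TT_summable (a+1) (b+1) (by positivity) (by positivity))]
  simp_rw [TT_s a b ha hb]

lemma TT_tsum_bounds (a b : ℝ) (ha : 0 < a) (hb : 0 < b) (hc : 1 < a + b) :
    0 ≤ ∑' n, TT a b n ∧ ∑' n, TT a b n ≤ 1/a+1/b := by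
  refine ⟨tsum_nonneg fun n => (TT_bounds a b ha hb hc n).1, ?_⟩
  rw [← (EE_hasSum a b ha hb).tsum_eq]
  exact Summable.tsum_le_tsum (fun n => (TT_bounds a b ha hb hc n).2) (TT_summable a b ha hb)
    (EE_hasSum a b ha hb).summable

lemma Gamma_diff (x : ℝ) (hx : 0 < x) : DifferentiableAt ℝ Real.Gamma x :=
  Real.differentiableAt_Gamma (fun m => by
    have : (0:ℝ) ≤ m := by positivity
    apply ne_of_gt; linarith)

lemma digamma_add_one (x : ℝ) (hx : 0 < x) : digamma (x+1) = digamma x + 1/x := by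
  have hg := Real.Gamma_pos_of_pos hx
  have h1 : HasDerivAt (fun y => Real.Gamma (y+1)) (deriv Real.Gamma (x+1)) x :=
    (Gamma_diff (x+1) (by positivity)).hasDerivAt.comp_add_const x 1
  have h2 : HasDerivAt (fun y => y * Real.Gamma y) (1 * Real.Gamma x + x * deriv Real.Gamma x) x :=
    (hasDerivAt_id x).mul (Gamma_diff x hx).hasDerivAt
  have h3 : (fun y => Real.Gamma (y+1)) =ᶠ[nhds x] (fun y => y * Real.Gamma y) := by
    filter_upwards [lt_mem_nhds hx] with y hy
    exact Real.Gamma_add_one hy.ne'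
  have h4 := (h2.congr_of_eventuallyEq h3).unique h1
  unfold digamma
  rw [← h4, Real.Gamma_add_one hx.ne']
  field_simp
  ring

lemma digamma_mono (x y : ℝ) (hx : 0 < x) (hxy : x ≤ y) : digamma x ≤ digamma y := by
  have hd : ∀ z, 0 < z → HasDerivAt (Real.log ∘ Real.Gamma) (digamma z) z := fun z hz =>
    (Gamma_diff z hz).hasDerivAt.log (Real.Gamma_pos_of_pos hz).ne'
  have hm := Real.convexOn_log_Gamma.monotoneOn_deriv
    (fun z hz => (hd z hz).differentiableAt)
  have := hm (a := x) hx (b := y) (hx.trans_le hxy) hxy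
  rwa [(hd x hx).deriv, (hd y (hx.trans_le hxy)).deriv] at this

noncomputable def SS (a : ℝ) : ℝ := digamma ((a+1)/2) - digamma (a/2)

lemma SS_rec (a : ℝ) (ha : 0 < a) : SS a + SS (a+1) = 2/a := by
  unfold SS
  rw [show (a+1+1)/2 = a/2+1 by ring, digamma_add_one (a/2) (by positivity)]
  field_simp
  ring

lemma SS_nonneg (a : ℝ) (ha : 0 < a) : 0 ≤ SS a :=
  sub_nonneg.2 (digamma_mono _ _ (by positivity) (by linarith))

lemma SS_le (a : ℝ) (ha : 0 < a) : SS a ≤ 2/a := by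
  have := SS_rec a ha
  have := SS_nonneg (a+1) (by positivity)
  linarith

noncomputable def DD (a b : ℝ) : ℝ := 2 * ∑' n, TT a b n - (SS a + SS b)

lemma DD_rec (a b : ℝ) (ha : 0 < a) (hb : 0 < b) : DD (a+1) (b+1) = - DD a b := by
  have h1 := TT_rec a b ha hb
  have h2 := SS_rec a ha
  have h3 := SS_rec b hb
  unfold DD
  rw [div_eq_mul_one_div] at h2 h3
  linarith

lemma DD_iter (a b : ℝ) (ha : 0 < a) (hb : 0 < b) (n : ℕ) : |DD (a+n) (b+n)| = |DD a b| := by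
  induction n with
  | zero => simp
  | succ n ih =>
    push_cast
    rw [← add_assoc, ← add_assoc, DD_rec _ _ (by positivity) (by positivity), abs_neg, ih]

lemma DD_bound (a b : ℝ) (ha : 0 < a) (hb : 0 < b) (hc : 1 < a + b) : |DD a b| ≤ 2/a+2/b := by
  have h1 := TT_tsum_bounds a b ha hb hc
  have h2 := SS_le a ha
  have h3 := SS_le b hb
  have h4 := SS_nonneg a ha
  have h5 := SS_nonneg b hb
  have e1 := div_eq_mul_one_div 2 a
  have e2 := div_eq_mul_one_div 2 b
  unfold DD
  rw [abs_le]
  constructor <;> linarith [h1.1, h1.2]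

lemma DD_zero (a b : ℝ) (ha : 0 < a) (hb : 0 < b) : DD a b = 0 := by
  have hl : ∀ x : ℝ, Filter.Tendsto (fun n : ℕ => 2 / (x + n)) Filter.atTop (nhds 0) := fun x =>
    Filter.Tendsto.const_div_atTop (Filter.tendsto_atTop_add_const_left _ x tendsto_natCast_atTop_atTop) 2
  have h : |DD a b| ≤ 0 := by
    have := (hl a).add (hl b)
    rw [add_zero] at this
    refine ge_of_tendsto this ?_
    filter_upwards [Filter.eventually_ge_atTop 1] with n hn
    have hn' : (1:ℝ) ≤ n := by exact_mod_cast hn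
    rw [← DD_iter a b ha hb n]
    exact DD_bound _ _ (by positivity) (by positivity) (by linarith)
  exact abs_eq_zero.1 (le_antisymm h (abs_nonneg _))

theorem stmt10 (a b : ℝ) (ha : 0 < a) (hb : 0 < b) :
    2 * Beta a b * F32 a b ((a + b - 1) / 2) (a + b) ((a + b + 1) / 2) 1
      = digamma ((a + 1) / 2) + digamma ((b + 1) / 2)
          - digamma (a / 2) - digamma (b / 2) := by
  have h := DD_zero a b ha hb
  have e : Beta a b * F32 a b ((a + b - 1) / 2) (a + b) ((a + b + 1) / 2) 1 = ∑' n, TT a b n := by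
    unfold F32
    rw [← tsum_mul_left]
    apply tsum_congr
    intro n
    unfold TT UU
    rw [one_pow, mul_one, mul_assoc (Beta a b), div_mul_div_comm]
    congr 2
    ring
  unfold DD SS at h
  rw [mul_assoc, e]
  linarith
end

section
/- For $N \geq 1$ and rationals $r_1, r_2, r_3, r_4 \in \frac{1}{N}\mathbb{Z}$ with $r_1+r_2+r_3+r_4 \in \mathbb{Z}$ and no $r_i \in \mathbb{Z}$: if $\{s r_1\}+\{s r_2\}+\{s r_3\}+\{s r_4\} = 2$ for all $s$ coprime to $N$, then the Gamma quotient $\Gamma(\{r_1\})\Gamma(\{r_2\})\Gamma(\{r_3\})\Gamma(\{r_4\})/\pi^2$ is an algebraic number. -/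
open Finset

namespace KO

lemma gauss_convex (m k : ℕ) (hm : 1 ≤ m) :
    ConvexOn ℝ (Set.Ioi (0 : ℝ)) (fun x => Real.log (Real.Gamma ((x + k) / m))) := by
  have hm' : (0 : ℝ) < m := by exact_mod_cast hm
  refine ⟨convex_Ioi 0, fun x hx y hy a b ha hb hab => ?_⟩
  have hx' : (0 : ℝ) < x := hx
  have hy' : (0 : ℝ) < y := hy
  have h := Real.convexOn_log_Gamma.2 (x := (x + k) / m) (y := (y + k) / m)
    (by rw [Set.mem_Ioi]; positivity) (by rw [Set.mem_Ioi]; positivity) ha hb hab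
  have e : (a • x + b • y + k) / m = a • ((x + k) / m) + b • ((y + k) / m) := by
    simp only [smul_eq_mul]
    rw [show b = 1 - a by linarith]
    field_simp
    ring
  simp only [Function.comp_apply] at h
  simp only [e]
  exact h

lemma gauss_mult (m : ℕ) (hm : 1 ≤ m) {x : ℝ} (hx : 0 < x) :
    (m : ℝ) ^ x * ∏ k ∈ range m, Real.Gamma ((x + k) / m)
      = (m * ∏ k ∈ range m, Real.Gamma ((1 + k) / m)) * Real.Gamma x := by
  have hm' : (0 : ℝ) < m := by exact_mod_cast hm
  have hP : ∀ y : ℝ, 0 < y → ∀ k ∈ range m, 0 < Real.Gamma ((y + k) / m) := by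
    intro y hy k _
    apply Real.Gamma_pos_of_pos
    positivity
  set c : ℝ := m * ∏ k ∈ range m, Real.Gamma ((1 + k) / m) with hc
  have hcpos : 0 < c := mul_pos hm' (prod_pos (hP 1 one_pos))
  set f : ℝ → ℝ := fun x => ((m : ℝ) ^ x * ∏ k ∈ range m, Real.Gamma ((x + k) / m)) / c with hf
  have hfpos : ∀ {y : ℝ}, 0 < y → 0 < f y := by
    intro y hy
    exact div_pos (mul_pos (Real.rpow_pos_of_pos hm' _) (prod_pos (hP y hy))) hcpos
  have hfeq : ∀ {y : ℝ}, 0 < y → f (y + 1) = y * f y := by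
    intro y hy
    have key : (∏ k ∈ range m, Real.Gamma ((y + 1 + k) / m)) * Real.Gamma (y / m)
        = (y / m * Real.Gamma (y / m)) * ∏ k ∈ range m, Real.Gamma ((y + k) / m) := by
      have h1 := prod_range_succ (fun k : ℕ => Real.Gamma ((y + k) / m)) m
      have h2 := prod_range_succ' (fun k : ℕ => Real.Gamma ((y + k) / m)) m
      rw [h1] at h2
      have h3 : Real.Gamma ((y + m) / m) = y / m * Real.Gamma (y / m) := by
        rw [add_div, div_self hm'.ne', Real.Gamma_add_one (by positivity)]
      simp only [Nat.cast_zero, add_zero] at h2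
      rw [h3] at h2
      rw [mul_comm, mul_comm (y / m * _), h2, mul_comm]
      congr 1
      refine prod_congr rfl fun k _ => ?_
      push_cast
      ring_nf
    have hG : 0 < Real.Gamma (y / m) := Real.Gamma_pos_of_pos (by positivity)
    have key' : (∏ k ∈ range m, Real.Gamma ((y + 1 + k) / m))
        = (y / m) * ∏ k ∈ range m, Real.Gamma ((y + k) / m) := by
      apply mul_right_cancel₀ hG.ne'
      rw [key]; ring
    simp only [hf]
    rw [key', Real.rpow_add hm', Real.rpow_one]
    field_simp
  have hone : f 1 = 1 := by
    simp only [hf, Real.rpow_one]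
    exact div_self hcpos.ne'
  have hconv : ConvexOn ℝ (Set.Ioi 0) (Real.log ∘ f) := by
    have h1 : ConvexOn ℝ (Set.Ioi (0 : ℝ)) (fun x =>
        (x * Real.log m + ∑ k ∈ range m, Real.log (Real.Gamma ((x + k) / m))) + (- Real.log c)) := by
      apply ConvexOn.add_const
      apply ConvexOn.add
      · refine ⟨convex_Ioi 0, fun x _ y _ a b _ _ _ => le_of_eq ?_⟩
        simp only [smul_eq_mul]; ring
      · have : ∀ s : Finset ℕ, ConvexOn ℝ (Set.Ioi (0 : ℝ))
            (fun x : ℝ => ∑ k ∈ s, Real.log (Real.Gamma ((x + k) / m))) := by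
          intro s
          induction s using Finset.induction_on with
          | empty => simpa using convexOn_const (0 : ℝ) (convex_Ioi (0 : ℝ))
          | insert a s ha ih =>
            simp only [sum_insert ha]
            exact (gauss_convex m a hm).add ih
        exact this _
    refine h1.congr ?_
    intro y hy
    have hy' : (0 : ℝ) < y := hy
    have hPP := prod_pos (hP y hy')
    simp only [Function.comp_apply, hf]
    rw [Real.log_div (mul_pos (Real.rpow_pos_of_pos hm' _) hPP).ne' hcpos.ne',
      Real.log_mul (Real.rpow_pos_of_pos hm' _).ne' hPP.ne', Real.log_rpow hm',
      Real.log_prod (fun k hk => (hP y hy' k hk).ne')]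
    ring
  have := Real.eq_Gamma_of_log_convex hconv hfeq hfpos hone (show x ∈ Set.Ioi 0 from hx)
  rw [← this]
  simp only [hf]
  field_simp

/-- The rational subspace of logarithms of algebraic numbers. -/
noncomputable def S : Submodule ℚ ℝ where
  carrier := {x | IsAlgebraic ℚ (Real.exp x)}
  add_mem' := by
    intro a b ha hb
    simp only [Set.mem_ofPred_eq, Real.exp_add] at *
    exact ha.mul hb
  zero_mem' := by simpa using isAlgebraic_one
  smul_mem' := by
    intro c x hx
    simp only [Set.mem_ofPred_eq] at *
    have hd : 0 < c.den := c.den_pos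
    apply IsAlgebraic.of_pow hd
    have e : Real.exp (c • x) ^ c.den = Real.exp x ^ c.num := by
      rw [← Real.exp_nat_mul, ← Real.rpow_intCast, ← Real.exp_mul, mul_comm x]
      congr 1
      rw [Rat.smul_def, ← mul_assoc]
      congr 1
      have := Rat.den_mul_eq_num c
      exact_mod_cast this
    rw [e]
    rcases Int.eq_nat_or_neg c.num with ⟨n, h | h⟩
    · rw [h, zpow_natCast]; exact hx.pow n
    · rw [h, zpow_neg, zpow_natCast]; exact (hx.pow n).inv

lemma mem_S {x : ℝ} : x ∈ S ↔ IsAlgebraic ℚ (Real.exp x) := Iff.rfl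

lemma log_nat_mem_S (d : ℕ) (hd : 1 ≤ d) : Real.log d ∈ S := by
  rw [mem_S, Real.exp_log (by exact_mod_cast hd)]
  exact_mod_cast isAlgebraic_algebraMap (A := ℝ) (d : ℚ)

/-- normalised log Gamma -/
noncomputable def lg (x : ℚ) : ℝ := if x = 0 then 0 else
  Real.log (Real.Gamma x) - (1 / 2) * Real.log Real.pi

lemma lg_reflect {x : ℚ} (h0 : 0 < x) (h1 : x < 1) : lg x + lg (1 - x) ∈ S := by
  have h0' : (0 : ℝ) < x := by exact_mod_cast h0
  have h1' : (x : ℝ) < 1 := by exact_mod_cast h1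
  have hs : 0 < Real.sin (Real.pi * x) := by
    apply Real.sin_pos_of_pos_of_lt_pi
    · positivity
    · nlinarith [Real.pi_pos]
  have e : lg x + lg (1 - x) = - Real.log (Real.sin (Real.pi * x)) := by
    rw [lg, lg, if_neg h0.ne', if_neg (by linarith)]
    have hg := Real.Gamma_mul_Gamma_one_sub x
    have := congrArg Real.log hg
    rw [Real.log_mul (Real.Gamma_pos_of_pos h0').ne' (Real.Gamma_pos_of_pos (by linarith)).ne',
      Real.log_div Real.pi_pos.ne' hs.ne'] at this
    push_cast
    linarith
  rw [e]
  apply Submodule.neg_mem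
  rw [mem_S, Real.exp_log hs, mul_comm]
  exact (Real.isAlgebraic_sin_rat_mul_pi x).extendScalars (algebraMap ℤ ℚ).injective_int

lemma T_mem (d : ℕ) (hd : 1 ≤ d) : ∑ k ∈ range (d - 1), lg ((k + 1 : ℚ) / d) ∈ S := by
  have hd' : (0 : ℚ) < d := by exact_mod_cast hd
  set T := ∑ k ∈ range (d - 1), lg ((k + 1 : ℚ) / d) with hT
  have h2 : T + T ∈ S := by
    have : T = ∑ k ∈ range (d - 1), lg (1 - (k + 1 : ℚ) / d) := by
      rw [hT, ← sum_range_reflect]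
      refine sum_congr rfl fun k hk => ?_
      rw [mem_range] at hk
      congr 1
      have : ((d - 1 - 1 - k : ℕ) : ℚ) = d - 2 - k := by
        rw [show d - 1 - 1 - k = d - (2 + k) by omega, Nat.cast_sub (by omega)]
        push_cast; ring
      rw [this]
      field_simp
      ring
    nth_rewrite 2 [this]
    rw [hT, ← sum_add_distrib]
    refine Submodule.sum_mem _ fun k hk => ?_
    rw [mem_range] at hk
    apply lg_reflect
    · positivity
    · rw [div_lt_one hd']
      exact_mod_cast (by omega : k + 1 < d)
  have : T = (1 / 2 : ℚ) • (T + T) := by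
    rw [Rat.smul_def]; push_cast; ring
  rw [this]
  exact S.smul_mem _ h2

lemma lg_dist (d : ℕ) (hd : 1 ≤ d) (y : ℚ) (hy0 : 0 ≤ y) :
    (∑ k ∈ range d, lg ((y + k) / d)) - lg y ∈ S := by
  have hdR : (0 : ℝ) < d := by exact_mod_cast hd
  have hdQ : (0 : ℚ) < d := by exact_mod_cast hd
  have hT := T_mem d hd
  rcases hy0.eq_or_lt with rfl | hy
  · obtain ⟨e, rfl⟩ : ∃ e, d = e + 1 := ⟨d - 1, by omega⟩
    rw [sum_range_succ']
    simpa [lg] using hT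
  · have hyR : (0 : ℝ) < y := by exact_mod_cast hy
    have hpos : ∀ z : ℝ, 0 < z → ∀ k ∈ range d, Real.Gamma ((z + k) / d) ≠ 0 := by
      intro z hz k _
      exact (Real.Gamma_pos_of_pos (by positivity)).ne'
    have hg := congrArg Real.log (gauss_mult d hd hyR)
    rw [Real.log_mul (Real.rpow_pos_of_pos hdR _).ne' (prod_ne_zero_iff.2 (hpos y hyR)),
      Real.log_mul (mul_ne_zero hdR.ne' (prod_ne_zero_iff.2 (hpos 1 one_pos)))
        (Real.Gamma_pos_of_pos hyR).ne',
      Real.log_mul hdR.ne' (prod_ne_zero_iff.2 (hpos 1 one_pos)),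
      Real.log_rpow hdR, Real.log_prod (hpos y hyR), Real.log_prod (hpos 1 one_pos)] at hg
    have hTe : ∑ k ∈ range (d - 1), lg ((k + 1 : ℚ) / d) =
        (∑ k ∈ range d, Real.log (Real.Gamma ((1 + k) / d))) - ((d : ℝ) - 1) / 2 * Real.log Real.pi := by
      obtain ⟨e, rfl⟩ : ∃ e, d = e + 1 := ⟨d - 1, by omega⟩
      rw [sum_range_succ]
      have h1 : ((1 + e : ℝ) / ((e + 1 : ℕ) : ℝ)) = 1 := by
        push_cast
        rw [add_comm, div_self (by positivity)]
      rw [h1, Real.Gamma_one, Real.log_one, add_zero]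
      have : ∀ k ∈ range (e + 1 - 1), lg ((k + 1 : ℚ) / ((e + 1 : ℕ) : ℚ)) =
          Real.log (Real.Gamma ((1 + k) / ((e + 1 : ℕ) : ℝ))) - 1 / 2 * Real.log Real.pi := by
        intro k _
        rw [lg, if_neg (by positivity)]
        push_cast
        rw [add_comm (k : ℝ)]
      rw [sum_congr rfl this, sum_sub_distrib]
      simp
      ring
    have hLe : ∑ k ∈ range d, lg ((y + k) / d) =
        (∑ k ∈ range d, Real.log (Real.Gamma ((y + k) / d))) - (d : ℝ) / 2 * Real.log Real.pi := by
      have : ∀ k ∈ range d, lg ((y + k : ℚ) / d) =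
          Real.log (Real.Gamma ((y + k) / d)) - 1 / 2 * Real.log Real.pi := by
        intro k _
        rw [lg, if_neg (by positivity)]
        push_cast
        rfl
      rw [sum_congr rfl this, sum_sub_distrib]
      simp
      ring
    have hfin : (∑ k ∈ range d, lg ((y + k) / d)) - lg y =
        Real.log d + (∑ k ∈ range (d - 1), lg ((k + 1 : ℚ) / d)) - y • Real.log d := by
      rw [hTe, hLe, lg, if_neg hy.ne', Rat.smul_def]
      linarith
    rw [hfin]
    exact S.sub_mem (S.add_mem (log_nat_mem_S d hd) hT) (S.smul_mem _ (log_nat_mem_S d hd))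

end KO

namespace KO
open Complex Filter Topology MeasureTheory HurwitzZeta

lemma re_one_sub_pos {z : ℂ} (hz : ‖z‖ = 1) (hz1 : z ≠ 1) {t : ℝ} (ht : 0 ≤ t) :
    0 < (1 - z * (Real.exp (-t) : ℝ)).re := by
  have hre : z.re < 1 := by
    rcases (Complex.re_le_norm z).lt_or_eq with h | h
    · rwa [hz] at h
    · exfalso
      apply hz1
      have h2 : z.re = 1 := by rw [h, hz]
      have h3 := Complex.sq_norm z
      rw [hz, Complex.normSq_apply, h2] at h3
      have h4 : z.im = 0 := by nlinarith
      exact Complex.ext (by simpa using h2) (by simpa using h4)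
  have h1 : Real.exp (-t) ≤ 1 := Real.exp_le_one_iff.2 (by linarith)
  have h2 := Real.exp_pos (-t)
  simp only [sub_re, one_re, mul_re, ofReal_re, ofReal_im, mul_zero, sub_zero]
  nlinarith

lemma expZeta_one {x : ℝ} (h0 : 0 < x) (h1 : x < 1) :
    expZeta (x : UnitAddCircle) 1 = - Complex.log (1 - cexp (2 * Real.pi * I * x)) := by
  set z : ℂ := cexp (2 * Real.pi * I * x) with hzdef
  have hz : ‖z‖ = 1 := by
    rw [hzdef, show (2 * Real.pi * I * x : ℂ) = ((2 * Real.pi * x : ℝ) : ℂ) * I by push_cast; ring]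
    exact Complex.norm_exp_ofReal_mul_I _
  have hz1 : z ≠ 1 := by
    intro h
    rw [hzdef, Complex.exp_eq_one_iff] at h
    obtain ⟨n, hn⟩ := h
    have h2 : (2 * Real.pi * I : ℂ) ≠ 0 := by simp [Real.pi_ne_zero]
    have h3 : (x : ℂ) = n := by
      apply mul_left_cancel₀ h2
      rw [hn]; ring
    have h4 : x = n := by exact_mod_cast h3
    rw [h4] at h0 h1
    have h5 : 0 < n := by exact_mod_cast h0
    have h6 : n < 1 := by exact_mod_cast h1
    omega
  have hre := fun {t : ℝ} (ht : 0 ≤ t) => re_one_sub_pos hz hz1 ht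
  have hne : ∀ {t : ℝ}, 0 ≤ t → (1 - z * (Real.exp (-t) : ℝ)) ≠ 0 := by
    intro t ht h
    have := hre ht
    rw [h] at this
    simp at this
  set F : ℝ → ℂ := fun t => z * (Real.exp (-t) : ℝ) / (1 - z * (Real.exp (-t) : ℝ)) with hF
  have hcexp : Continuous fun t : ℝ => z * (Real.exp (-t) : ℝ) := by fun_prop
  have hFc : ContinuousOn F (Set.Ici 0) :=
    hcexp.continuousOn.div (continuous_const.sub hcexp).continuousOn (fun t ht => hne ht)
  have hFloc : LocallyIntegrableOn F (Set.Ioi 0) :=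
    (hFc.mono Set.Ioi_subset_Ici_self).locallyIntegrableOn measurableSet_Ioi
  have hlim : Tendsto (fun t : ℝ => Real.exp (-t)) atTop (𝓝 0) := Real.tendsto_exp_neg_atTop_nhds_zero
  have hlim2 : Tendsto (fun t : ℝ => (1 - z * (Real.exp (-t) : ℝ))) atTop (𝓝 1) := by
    have : Tendsto (fun t : ℝ => ((Real.exp (-t) : ℝ) : ℂ)) atTop (𝓝 ((0 : ℝ) : ℂ)) :=
      (Complex.continuous_ofReal.tendsto _).comp hlim
    simpa using (this.const_mul z).const_sub 1
  have htop : F =O[atTop] fun t => Real.exp (-(1 : ℝ) * t) := by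
    have hb : (fun t : ℝ => z / (1 - z * (Real.exp (-t) : ℝ))) =O[atTop] (fun _ => (1 : ℝ)) := by
      have : Tendsto (fun t : ℝ => z / (1 - z * (Real.exp (-t) : ℝ))) atTop (𝓝 (z / 1)) :=
        tendsto_const_nhds.div hlim2 one_ne_zero
      exact this.isBigO_one ℝ
    have hb2 : (fun t : ℝ => ((Real.exp (-t) : ℝ) : ℂ)) =O[atTop] fun t => Real.exp (-(1 : ℝ) * t) := by
      apply Asymptotics.IsBigO.of_bound 1
      filter_upwards with t
      rw [Complex.norm_real]
      simp
    refine (hb.mul hb2).congr (fun t => ?_) (fun t => ?_)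
    · simp only [hF]; ring
    · simp
  have hbot : F =O[𝓝[>] 0] fun t : ℝ => t ^ (-(0 : ℝ)) := by
    have : Tendsto F (𝓝[>] 0) (𝓝 (F 0)) :=
      (hFc 0 (by simp)).mono_left (nhdsWithin_mono _ Set.Ioi_subset_Ici_self)
    simpa using this.isBigO_one ℝ
  have hconv : MellinConvergent F 1 :=
    mellinConvergent_of_isBigO_rpow_exp one_pos hFloc htop hbot (by simp)
  have hdiff : DifferentiableAt ℂ (mellin F) 1 :=
    mellin_differentiableAt_of_isBigO_rpow_exp one_pos hFloc htop hbot (by simp)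
  -- the identity for real part > 1
  have hid : ∀ s : ℂ, 1 < s.re → mellin F s = Complex.Gamma s * expZeta (x : UnitAddCircle) s := by
    intro s hs
    have hsum := hasSum_expZeta_of_one_lt_re x hs
    rw [← hasSum_nat_add_iff' 1] at hsum
    have hs0 : s ≠ 0 := by
      intro h; rw [h] at hs; simp at hs; linarith
    simp only [Finset.sum_range_one, Nat.cast_zero, Complex.zero_cpow hs0, div_zero, sub_zero] at hsum
    have hm := hasSum_mellin (ι := ℕ) (a := fun n => z ^ (n + 1)) (p := fun n => (n : ℝ) + 1) (F := F)
      (s := s) (fun n => Or.inr (by positivity)) (by linarith) ?_ ?_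
    · refine hm.unique ((hsum.mul_left (Complex.Gamma s)).congr_fun fun n => ?_)
      rw [mul_div_assoc]
      congr 2
      · rw [hzdef, ← Complex.exp_nat_mul]
        congr 1; push_cast; ring
      · push_cast; rfl
    · intro t ht
      have ht' : (0 : ℝ) < t := ht
      have hlt : ‖z * (Real.exp (-t) : ℝ)‖ < 1 := by
        rw [norm_mul, hz, one_mul, Complex.norm_real, Real.norm_eq_abs, Real.abs_exp]
        rw [← Real.exp_zero]; exact Real.exp_lt_exp.2 (by linarith)
      have hg := (hasSum_geometric_of_norm_lt_one hlt).mul_left (z * (Real.exp (-t) : ℝ))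
      rw [← div_eq_mul_inv] at hg
      refine hg.congr_fun fun n => ?_
      rw [← pow_succ', mul_pow]
      congr 1
      rw [← Complex.ofReal_pow, ← Real.exp_nat_mul]
      congr 2; push_cast; ring
    · have := (Real.summable_nat_rpow_inv (p := s.re)).2 hs
      have := (summable_nat_add_iff 1).2 this
      refine this.congr fun n => ?_
      rw [norm_pow, hz, one_pow, one_div]
      push_cast; rfl
  have hne0 : (x : UnitAddCircle) ≠ 0 := by
    intro h
    rw [AddCircle.coe_eq_zero_iff] at h
    obtain ⟨n, hn⟩ := h
    simp at hn
    rw [← hn] at h0 h1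
    have h5 : 0 < n := by exact_mod_cast h0
    have h6 : n < 1 := by exact_mod_cast h1
    omega
  have hc1 : Tendsto (fun s : ℝ => mellin F (s : ℂ)) (𝓝[>] 1) (𝓝 (mellin F 1)) := by
    have : Tendsto (fun s : ℝ => (s : ℂ)) (𝓝[>] 1) (𝓝 1) :=
      ((Complex.continuous_ofReal.tendsto' 1 1 (by simp))).mono_left nhdsWithin_le_nhds
    exact hdiff.continuousAt.tendsto.comp this
  have hc2 : Tendsto (fun s : ℝ => Complex.Gamma s * expZeta (x : UnitAddCircle) s) (𝓝[>] 1)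
      (𝓝 (Complex.Gamma 1 * expZeta (x : UnitAddCircle) 1)) := by
    have : Tendsto (fun s : ℝ => (s : ℂ)) (𝓝[>] 1) (𝓝 1) :=
      ((Complex.continuous_ofReal.tendsto' 1 1 (by simp))).mono_left nhdsWithin_le_nhds
    have hG : ContinuousAt Complex.Gamma 1 :=
      (Complex.differentiableAt_Gamma_one).continuousAt
    have hE : ContinuousAt (expZeta (x : UnitAddCircle)) 1 :=
      ((differentiable_expZeta_of_ne_zero hne0) 1).continuousAt
    exact ((hG.mul hE).tendsto).comp this
  have heq : mellin F 1 = expZeta (x : UnitAddCircle) 1 := by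
    have := tendsto_nhds_unique hc1 (hc2.congr' ?_)
    · rw [this, Complex.Gamma_one, one_mul]
    · filter_upwards [self_mem_nhdsWithin] with s hs
      exact (hid s (by simpa using hs)).symm
  rw [← heq]
  have hmel : mellin F 1 = ∫ t in Set.Ioi (0 : ℝ), F t := by
    rw [mellin]
    simp
  have hint : IntegrableOn F (Set.Ioi 0) := by
    have := hconv
    rw [MellinConvergent] at this
    simpa using this
  rw [hmel]
  have hslit : ∀ {t : ℝ}, 0 ≤ t → (1 - z * (Real.exp (-t) : ℝ)) ∈ Complex.slitPlane :=
    fun ht => Or.inl (hre ht)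
  have := integral_Ioi_of_hasDerivAt_of_tendsto' (a := 0) (m := 0)
    (f := fun t : ℝ => Complex.log (1 - z * (Real.exp (-t) : ℝ))) (f' := F) ?_ hint ?_
  · rw [this]; simp
  · intro t ht
    have h1 : HasDerivAt (fun t : ℝ => 1 - z * (Real.exp (-t) : ℝ)) (z * (Real.exp (-t) : ℝ)) t := by
      have hr : HasDerivAt (fun t : ℝ => Real.exp (-t)) (Real.exp (-t) * (-1)) t :=
        (hasDerivAt_neg t).exp
      have := (hr.ofReal_comp.const_mul z).const_sub 1
      convert! this using 1
      push_cast; ring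
    exact h1.clog_real (hslit ht)
  · have := (continuousAt_clog Complex.one_mem_slitPlane).tendsto.comp hlim2
    simpa [Function.comp_def] using this

lemma log_val {x : ℝ} (h0 : 0 < x) (h1 : x < 1) :
    Complex.log (1 - cexp (2 * Real.pi * I * x)) =
      (Real.log (2 * Real.sin (Real.pi * x)) : ℝ) + ((Real.pi * (x - 1 / 2) : ℝ) : ℂ) * I := by
  have hs : 0 < Real.sin (Real.pi * x) :=
    Real.sin_pos_of_pos_of_lt_pi (by positivity) (by nlinarith [Real.pi_pos])
  have e : (1 - cexp (2 * Real.pi * I * x)) =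
      cexp ((Real.log (2 * Real.sin (Real.pi * x)) : ℝ) + ((Real.pi * (x - 1 / 2) : ℝ) : ℂ) * I) := by
    rw [Complex.exp_add, ← Complex.ofReal_exp, Real.exp_log (by positivity)]
    have h2 : ((Real.pi * (x - 1 / 2) : ℝ) : ℂ) * I = Real.pi * x * I - Real.pi / 2 * I := by
      push_cast; ring
    rw [h2, Complex.exp_sub, Complex.exp_pi_div_two_mul_I]
    push_cast
    rw [Complex.sin]
    have h3 : cexp (2 * Real.pi * I * x) = cexp (Real.pi * x * I) * cexp (Real.pi * x * I) := by
      rw [← Complex.exp_add]; congr 1; ring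
    have h4 : cexp (-(Real.pi * x) * I) * cexp (Real.pi * x * I) = 1 := by
      rw [← Complex.exp_add]; simp
    rw [h3]
    generalize cexp (-(Real.pi * x) * I) = b at *
    generalize cexp (Real.pi * x * I) = a at *
    field_simp
    linear_combination (-1 : ℂ) * h4
  rw [e, Complex.log_exp]
  · simp; nlinarith [Real.pi_pos]
  · simp; nlinarith [Real.pi_pos]

end KO
namespace KO

/-- The normalised first Bernoulli function on `ZMod N`. -/
noncomputable def bq (x : ℚ) : ℚ := if x = 0 then 0 else x - 1 / 2

open Complex HurwitzZeta in
lemma bernoulli_ne_zero {f : ℕ} [NeZero f] (χ : DirichletCharacter ℂ f) (hp : χ.IsPrimitive)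
    (ho : χ.Odd) : ∑ j : ZMod f, χ j * ((bq ((j.val : ℚ) / f) : ℚ) : ℂ) ≠ 0 := by
  have hf0 : (0 : ℝ) < f := by exact_mod_cast Nat.pos_of_ne_zero (NeZero.ne f)
  have hχ1 : χ ≠ 1 := by
    intro h
    have h2 : χ (-1) = -1 := ho
    rw [h, MulChar.one_apply (isUnit_one.neg)] at h2
    norm_num at h2
  have hf1 : f ≠ 1 := fun h => hχ1 (DirichletCharacter.level_one' χ h)
  have hχ0 : χ 0 = 0 := DirichletCharacter.map_zero' χ hf1
  have hneg : ∀ j, χ (-j) = - χ j := fun j => ho.eval_neg _ j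
  have hL : ZMod.LFunction (ZMod.dft χ) 1 ≠ 0 := by
    have hg : gaussSum χ ZMod.stdAddChar ≠ 0 := by
      intro hg
      have h0 : ZMod.dft (χ : ZMod f → ℂ) = 0 := by
        ext k
        rw [hp.fourierTransform_eq_inv_mul_gaussSum, hg, mul_zero]
        rfl
      have h1 : (χ : ZMod f → ℂ) = 0 := by simpa using h0
      have := congrFun h1 1
      simp at this
    have he : ZMod.LFunction (ZMod.dft χ) 1 =
        - gaussSum χ ZMod.stdAddChar * DirichletCharacter.LFunction χ⁻¹ 1 := by
      have hoi : χ⁻¹.Odd := by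
        have h2 : χ (-1) = -1 := ho
        rw [DirichletCharacter.Odd, MulChar.inv_apply_eq_inv, h2]
        rw [Ring.inverse_eq_inv']; norm_num
      have hlin : ∀ h : ZMod f → ℂ, ∑ j, (ZMod.dft χ) j * h j =
          - gaussSum χ ZMod.stdAddChar * ∑ j, χ⁻¹ j * h j := by
        intro h
        rw [Finset.mul_sum]
        refine Finset.sum_congr rfl fun j _ => ?_
        rw [hp.fourierTransform_eq_inv_mul_gaussSum, hoi.eval_neg]
        ring
      rw [DirichletCharacter.LFunction, ZMod.LFunction, ZMod.LFunction, hlin]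
      ring
    rw [he]
    refine mul_ne_zero (neg_ne_zero.2 hg) (DirichletCharacter.LFunction_apply_one_ne_zero ?_)
    exact inv_ne_one.2 hχ1
  rw [ZMod.LFunction_dft _ (Or.inl hχ0)] at hL
  set ℓ : ZMod f → ℂ := fun j => ((Real.log (2 * Real.sin (Real.pi * ((j.val : ℝ) / f))) : ℝ) : ℂ) with hℓ
  have hℓneg : ∀ j, ℓ (-j) = ℓ j := by
    intro j
    by_cases hj : j = 0
    · rw [hj, neg_zero]
    · simp only [hℓ]
      rw [ZMod.neg_val, if_neg hj, Nat.cast_sub (ZMod.val_lt j).le]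
      congr 3
      rw [sub_div, div_self hf0.ne', mul_sub, mul_one, Real.sin_pi_sub]
  have hℓsum : ∑ j, χ j * ℓ j = 0 := by
    have : ∑ j, χ j * ℓ j = ∑ j, χ (-j) * ℓ (-j) :=
      (Equiv.sum_comp (Equiv.neg (ZMod f)) (fun j => χ j * ℓ j)).symm
    simp only [hneg, hℓneg, neg_mul, Finset.sum_neg_distrib] at this
    linear_combination (1 / 2 : ℂ) * this
  have hval : ∀ j : ZMod f, χ j * expZeta (ZMod.toAddCircle j) 1 =
      - (χ j * ℓ j) - (Real.pi * I) * (χ j * ((bq ((j.val : ℚ) / f) : ℚ) : ℂ)) := by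
    intro j
    by_cases hj : j = 0
    · rw [hj, hχ0]; simp
    · have hv : 0 < j.val := ZMod.val_pos.2 hj
      have hvR : (0 : ℝ) < j.val := by exact_mod_cast hv
      have hvR' : (j.val : ℝ) < f := by exact_mod_cast ZMod.val_lt j
      rw [ZMod.toAddCircle_apply, expZeta_one (div_pos hvR hf0) ((div_lt_one hf0).2 hvR'),
        log_val (div_pos hvR hf0) ((div_lt_one hf0).2 hvR')]
      have hq : (j.val : ℚ) / f ≠ 0 := by
        apply div_ne_zero
        · exact_mod_cast hv.ne'
        · exact_mod_cast NeZero.ne f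
      rw [bq, if_neg hq]
      simp only [hℓ]
      push_cast
      ring
  intro hB
  apply hL
  rw [← Equiv.sum_comp (Equiv.neg (ZMod f))]
  simp only [Equiv.neg_apply, neg_neg, hneg, neg_mul, hval]
  rw [Finset.sum_neg_distrib, Finset.sum_sub_distrib, Finset.sum_neg_distrib, hℓsum, ← Finset.mul_sum, hB]
  simp

/-- distribution relation -/
def IsDist {A : Type*} [AddCommGroup A] (N : ℕ) (L : ZMod N → A) : Prop :=
  ∀ d, d ∣ N → ∀ x : ZMod N, ∑ k ∈ range d, L (x + ((k * (N / d) : ℕ) : ZMod N)) = L (d * x)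

lemma isDist_of {A : Type*} [AddCommGroup A] (N : ℕ) [NeZero N] (ψ : ℚ → A)
    (hψ : ∀ d : ℕ, 1 ≤ d → ∀ y : ℚ, 0 ≤ y → y < 1 → ∑ k ∈ range d, ψ ((y + k) / d) = ψ y) :
    IsDist N (fun a => ψ ((a.val : ℚ) / N)) := by
  rintro d ⟨n, hn⟩ x
  have hN0 : N ≠ 0 := NeZero.ne N
  have hd : 0 < d := Nat.pos_of_ne_zero (by rintro rfl; simp at hn; exact hN0 hn)
  have hn0 : 0 < n := Nat.pos_of_ne_zero (by rintro rfl; simp at hn; exact hN0 hn)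
  have hNd : N / d = n := by rw [hn, Nat.mul_div_cancel_left _ hd]
  rw [hNd]
  set L : ZMod N → A := fun a => ψ ((a.val : ℚ) / N) with hL
  have hdn : ((d * n : ℕ) : ZMod N) = 0 := by rw [← hn]; simp
  -- periodicity
  have hper : ∀ x : ZMod N, ∑ k ∈ range d, L (x + (n : ℕ) + ((k * n : ℕ) : ZMod N))
      = ∑ k ∈ range d, L (x + ((k * n : ℕ) : ZMod N)) := by
    intro x
    have h1 := sum_range_succ (fun k : ℕ => L (x + ((k * n : ℕ) : ZMod N))) d
    have h2 := sum_range_succ' (fun k : ℕ => L (x + ((k * n : ℕ) : ZMod N))) d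
    rw [h1, hdn] at h2
    simp only [Nat.zero_mul, Nat.cast_zero, add_zero] at h2
    rw [add_right_cancel h2]
    refine sum_congr rfl fun k _ => ?_
    congr 1
    push_cast; ring
  have hperj : ∀ j : ℕ, ∀ x : ZMod N, ∑ k ∈ range d, L (x + ((j * n : ℕ) : ZMod N) + ((k * n : ℕ) : ZMod N))
      = ∑ k ∈ range d, L (x + ((k * n : ℕ) : ZMod N)) := by
    intro j
    induction j with
    | zero => intro x; simp
    | succ j ih =>
      intro x
      rw [← ih x, ← hper (x + ((j * n : ℕ) : ZMod N))]
      refine sum_congr rfl fun k _ => ?_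
      congr 1
      push_cast; ring
  obtain ⟨r, j, hr, hx⟩ : ∃ r j : ℕ, r < n ∧ x = (r : ZMod N) + ((j * n : ℕ) : ZMod N) := by
    refine ⟨x.val % n, x.val / n, Nat.mod_lt _ hn0, ?_⟩
    rw [← Nat.cast_add, mul_comm, Nat.mod_add_div, ZMod.natCast_zmod_val]
  rw [hx, hperj]
  have hdx : (d : ZMod N) * ((r : ZMod N) + ((j * n : ℕ) : ZMod N)) = ((d * r : ℕ) : ZMod N) := by
    have : (d : ZMod N) * n = 0 := by rw [← hdn]; push_cast; rfl
    push_cast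
    linear_combination (j : ZMod N) * this
  rw [hdx]
  have hnQ : (0 : ℚ) < n := by exact_mod_cast hn0
  have hdQ : (0 : ℚ) < d := by exact_mod_cast hd
  have hNQ : (N : ℚ) = d * n := by rw [hn]; push_cast; rfl
  have := hψ d hd ((r : ℚ) / n) (by positivity) (by rw [div_lt_one hnQ]; exact_mod_cast hr)
  simp only [hL]
  rw [ZMod.val_natCast_of_lt (by rw [hn]; exact Nat.mul_lt_mul_of_pos_left hr hd)]
  rw [show ((d * r : ℕ) : ℚ) / N = r / n by rw [hNQ]; push_cast; field_simp]
  rw [← this]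
  refine sum_congr rfl fun k hk => ?_
  rw [mem_range] at hk
  rw [← Nat.cast_add, ZMod.val_natCast_of_lt ?_]
  · congr 1
    rw [hNQ]; push_cast; field_simp
  · rw [hn]
    calc r + k * n < n + k * n := by omega
      _ = (k + 1) * n := by ring
      _ ≤ d * n := Nat.mul_le_mul_right _ hk

lemma bq_dist (d : ℕ) (hd : 1 ≤ d) (y : ℚ) (hy0 : 0 ≤ y) :
    ∑ k ∈ range d, bq ((y + k) / d) = bq y := by
  have hdQ : (0 : ℚ) < d := by exact_mod_cast hd
  have hgauss : ∀ e : ℕ, ∑ k ∈ range e, (k : ℚ) = e * (e - 1) / 2 := by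
    intro e
    induction e with
    | zero => simp
    | succ e ih => rw [sum_range_succ, ih]; push_cast; ring
  have key : ∑ k ∈ range d, ((y + k) / d - 1 / 2) = y - 1 / 2 := by
    rw [sum_sub_distrib, ← sum_div, sum_add_distrib, hgauss]
    simp only [sum_const, card_range, nsmul_eq_mul]
    field_simp
    ring
  rcases hy0.eq_or_lt with rfl | hy
  · obtain ⟨e, rfl⟩ : ∃ e, d = e + 1 := ⟨d - 1, by omega⟩
    rw [sum_range_succ'] at key ⊢
    have : ∀ k ∈ range e, bq ((0 + ((k + 1 : ℕ) : ℚ)) / ((e + 1 : ℕ) : ℚ)) =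
        (0 + ((k + 1 : ℕ) : ℚ)) / ((e + 1 : ℕ) : ℚ) - 1 / 2 := by
      intro k _
      rw [bq, if_neg (by positivity)]
    rw [sum_congr rfl this]
    simp [bq] at key ⊢
    linarith
  · rw [bq, if_neg hy.ne', ← key]
    refine sum_congr rfl fun k _ => ?_
    rw [bq, if_neg (by positivity)]

end KO
namespace KO

lemma unit_mul_eq {N M : ℕ} [NeZero N] (hM : M ∣ N) (u : (ZMod N)ˣ) (c : ℕ)
    (h : (((u : ZMod N).val : ℕ) : ZMod M) = c) :
    (u : ZMod N) * ((N / M : ℕ) : ZMod N) = ((c * (N / M) : ℕ) : ZMod N) := by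
  have h1 := (ZMod.natCast_eq_natCast_iff _ _ _).1 h
  have h2 := h1.mul_right' (N / M)
  rw [Nat.mul_div_cancel' hM] at h2
  have h3 := (ZMod.natCast_eq_natCast_iff _ _ _).2 h2
  rw [← h3]
  push_cast
  rw [ZMod.natCast_zmod_val]

lemma exists_unit {N M : ℕ} [NeZero N] (hM : M ∣ N) (c : ℕ) (hc : c.Coprime M) :
    ∃ u : (ZMod N)ˣ, (((u : ZMod N).val : ℕ) : ZMod M) = c := by
  obtain ⟨u, hu⟩ := ZMod.unitsMap_surjective hM (ZMod.unitOfCoprime c hc)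
  refine ⟨u, ?_⟩
  have := congrArg Units.val hu
  rw [ZMod.unitsMap_val, ZMod.coe_unitOfCoprime] at this
  rw [ZMod.natCast_val, this]

lemma chi_eq_one {N M : ℕ} [NeZero N] (χ : DirichletCharacter ℂ N) (hM : M ∣ N)
    (hf : χ.conductor ∣ M) (u : (ZMod N)ˣ) (h : (((u : ZMod N).val : ℕ) : ZMod M) = 1) :
    χ u = 1 := by
  have h1 := (DirichletCharacter.mem_conductorSet_iff_conductor_dvd χ hM).2 hf
  have h2 := (DirichletCharacter.factorsThrough_iff_ker_unitsMap hM).1 h1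
  have h3 : u ∈ (ZMod.unitsMap hM).ker := by
    rw [MonoidHom.mem_ker]
    ext
    rw [ZMod.unitsMap_val, ← ZMod.natCast_val, h]
    simp
  have h4 := congrArg Units.val (MonoidHom.mem_ker.1 (h2 h3))
  simpa using h4

lemma exists_chi_ne_one {N M : ℕ} [NeZero N] (χ : DirichletCharacter ℂ N) (hM : M ∣ N)
    (hf : ¬ χ.conductor ∣ M) :
    ∃ u : (ZMod N)ˣ, (((u : ZMod N).val : ℕ) : ZMod M) = 1 ∧ χ u ≠ 1 := by
  rw [← DirichletCharacter.mem_conductorSet_iff_conductor_dvd χ hM,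
    DirichletCharacter.mem_conductorSet_iff,
    DirichletCharacter.factorsThrough_iff_ker_unitsMap hM, SetLike.not_le_iff_exists] at hf
  obtain ⟨u, hu, hu2⟩ := hf
  refine ⟨u, ?_, ?_⟩
  · have := congrArg Units.val (MonoidHom.mem_ker.1 hu)
    rw [ZMod.unitsMap_val] at this
    rw [ZMod.natCast_val, this]
    simp
  · intro h
    apply hu2
    rw [MonoidHom.mem_ker]
    ext
    simpa using h

lemma eigen_zero {N : ℕ} [NeZero N] (χ : DirichletCharacter ℂ N) (E : ZMod N → ℂ)
    (hE : IsDist N E) (heig : ∀ (u : (ZMod N)ˣ) a, E (u * a) = χ u * E a)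
    (h0 : E ((N / χ.conductor : ℕ) : ZMod N) = 0) : ∀ a, E a = 0 := by
  have hN : N ≠ 0 := NeZero.ne N
  have stepA : ∀ M, M ∣ N → E ((N / M : ℕ) : ZMod N) = 0 → ∀ c : ℕ, c.Coprime M →
      E ((c * (N / M) : ℕ) : ZMod N) = 0 := by
    intro M hM hz c hc
    obtain ⟨u, hu⟩ := exists_unit hM c hc
    rw [← unit_mul_eq hM u c hu, heig, hz, mul_zero]
  have stepC : ∀ M, M ∣ N → χ.conductor ∣ M → E ((N / M : ℕ) : ZMod N) = 0 := by
    intro M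
    induction M using Nat.strong_induction_on with
    | _ M ih =>
      intro hM hfM
      by_cases hMf : M = χ.conductor
      · rw [hMf]; exact h0
      · obtain ⟨e, he⟩ := hfM
        have he1 : e ≠ 1 := by rintro rfl; apply hMf; simpa using he
        obtain ⟨p, hp, e', he'⟩ := Nat.exists_prime_and_dvd he1
        obtain ⟨q, hq⟩ := hM
        set M' := χ.conductor * e' with hM'
        have hMp : M = p * M' := by rw [he, he', hM']; ring
        have hM0 : 0 < M := Nat.pos_of_ne_zero (by rintro h; rw [h] at hq; simp at hq; exact hN hq)
        have hM'0 : 0 < M' := Nat.pos_of_ne_zero (by rintro h; rw [h] at hMp; simp at hMp; omega)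
        have hlt : M' < M := by
          rw [hMp]; nlinarith [hp.two_le]
        have hNM' : N / M' = p * q := by
          rw [hq, hMp, show p * M' * q = M' * (p * q) by ring, Nat.mul_div_cancel_left _ hM'0]
        have hNp : N / p = M' * q := by
          rw [hq, hMp, mul_assoc, Nat.mul_div_cancel_left _ hp.pos]
        have hNM : N / M = q := by rw [hq, Nat.mul_div_cancel_left _ hM0]
        have hM'N : M' ∣ N := ⟨p * q, by rw [hq, hMp]; ring⟩
        have hpN : p ∣ N := ⟨M' * q, by rw [hq, hMp]; ring⟩
        have hMN : M ∣ N := ⟨q, hq⟩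
        have hfM' : χ.conductor ∣ M' := ⟨e', rfl⟩
        have hz := ih M' hlt hM'N hfM'
        have hd := hE p hpN ((q : ℕ) : ZMod N)
        rw [hNp, ← Nat.cast_mul, ← hNM', hz] at hd
        have hterm : ∀ k ∈ range p, E ((q : ZMod N) + ((k * (M' * q) : ℕ) : ZMod N)) =
            if p ∣ 1 + k * M' then 0 else E (q : ZMod N) := by
          intro k _
          have hcopM' : (1 + k * M').Coprime M' := by simp
          have hrew : (q : ZMod N) + ((k * (M' * q) : ℕ) : ZMod N) = (((1 + k * M') * q : ℕ) : ZMod N) := by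
            push_cast; ring
          rw [hrew]
          split_ifs with hpk
          · obtain ⟨c, hc⟩ := hpk
            have hcc : c.Coprime M' := Nat.Coprime.coprime_dvd_left ⟨p, by rw [hc]; ring⟩ hcopM'
            have := stepA M' hM'N hz c hcc
            rw [hNM'] at this
            rw [hc, show p * c * q = c * (p * q) by ring]
            exact this
          · have hcop : (1 + k * M').Coprime M := by
              rw [hMp]
              exact Nat.Coprime.mul_right (((Nat.Prime.coprime_iff_not_dvd hp).2 hpk).symm) hcopM'
            obtain ⟨u, hu⟩ := exists_unit hMN _ hcop
            have h1 := unit_mul_eq hMN u _ hu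
            rw [hNM] at h1
            rw [← h1, heig, chi_eq_one χ hM'N hfM' u, one_mul]
            have h2 := (ZMod.natCast_eq_natCast_iff _ _ _).1 hu
            have h3 := h2.of_dvd (show M' ∣ M from ⟨p, by rw [hMp]; ring⟩)
            have h4 := (ZMod.natCast_eq_natCast_iff _ _ _).2 h3
            rw [h4]; push_cast; simp
        rw [sum_congr rfl hterm, sum_ite, sum_const_zero, zero_add, sum_const, nsmul_eq_mul] at hd
        rw [hNM]
        refine (mul_eq_zero.1 hd).resolve_left ?_
        rw [← ne_eq, Nat.cast_ne_zero, ← Nat.pos_iff_ne_zero, card_pos]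
        refine ⟨0, ?_⟩
        simp [hp.pos, hp.one_lt.ne']
  have stepB : ∀ M, M ∣ N → E ((N / M : ℕ) : ZMod N) = 0 := by
    intro M hM
    by_cases hf : χ.conductor ∣ M
    · exact stepC M hM hf
    · obtain ⟨u, hu, hu2⟩ := exists_chi_ne_one χ hM hf
      have h1 := unit_mul_eq hM u 1 (by simpa using hu)
      have h2 := heig u ((N / M : ℕ) : ZMod N)
      rw [h1, one_mul] at h2
      have h3 : (χ u - 1) * E ((N / M : ℕ) : ZMod N) = 0 := by linear_combination -h2
      exact (mul_eq_zero.1 h3).resolve_left (sub_ne_zero.2 hu2)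
  intro a
  have hNpos := Nat.pos_of_ne_zero hN
  have hgpos : 0 < Nat.gcd a.val N := Nat.gcd_pos_of_pos_right _ hNpos
  have hgN : Nat.gcd a.val N ∣ N := Nat.gcd_dvd_right _ _
  have hdiv : N / Nat.gcd a.val N ∣ N := Nat.div_dvd_of_dvd hgN
  have := stepA _ hdiv (stepB _ hdiv) (a.val / Nat.gcd a.val N) (Nat.coprime_div_gcd_div_gcd hgpos)
  rwa [Nat.div_div_self hgN hN, Nat.div_mul_cancel (Nat.gcd_dvd_left _ _), ZMod.natCast_zmod_val] at this

/-- chi-component -/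
noncomputable def comp {N : ℕ} [NeZero N] (χ : DirichletCharacter ℂ N) (L : ZMod N → ℂ) (a : ZMod N) : ℂ :=
  ∑ u : (ZMod N)ˣ, χ ((u⁻¹ : (ZMod N)ˣ) : ZMod N) * L (u * a)

lemma comp_eig {N : ℕ} [NeZero N] (χ : DirichletCharacter ℂ N) (L : ZMod N → ℂ) (v : (ZMod N)ˣ) (a : ZMod N) :
    comp χ L (v * a) = χ v * comp χ L a := by
  unfold comp
  rw [mul_sum, ← Equiv.sum_comp (Equiv.mulRight v)
    (fun u : (ZMod N)ˣ => χ v * (χ ((u⁻¹ : (ZMod N)ˣ) : ZMod N) * L (u * a)))]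
  refine sum_congr rfl fun u _ => ?_
  simp only [Equiv.coe_mulRight, mul_inv, Units.val_mul, map_mul]
  have : χ v * χ ((v⁻¹ : (ZMod N)ˣ) : ZMod N) = 1 := by
    rw [← map_mul, Units.mul_inv, map_one]
  rw [mul_assoc (u : ZMod N)]
  linear_combination (-(χ ((u⁻¹ : (ZMod N)ˣ) : ZMod N)) * L (u * (v * a))) * this

lemma comp_dist {N : ℕ} [NeZero N] (χ : DirichletCharacter ℂ N) (L : ZMod N → ℂ) (hL : IsDist N L) :
    IsDist N (comp χ L) := by
  intro d hd x
  unfold comp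
  rw [sum_comm]
  refine sum_congr rfl fun u _ => ?_
  rw [← mul_sum]
  congr 1
  have h1 := hL d hd (u * x)
  rw [show (u : ZMod N) * (d * x) = d * (u * x) by ring, ← h1]
  -- permutation of the subgroup of multiples of N / d by the unit u
  obtain ⟨n, hn⟩ := hd
  have hN : N ≠ 0 := NeZero.ne N
  have hdpos : 0 < d := Nat.pos_of_ne_zero (by rintro rfl; simp at hn; exact hN hn)
  have hnpos : 0 < n := Nat.pos_of_ne_zero (by rintro rfl; simp at hn; exact hN hn)
  have hNd : N / d = n := by rw [hn, Nat.mul_div_cancel_left _ hdpos]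
  rw [hNd]
  have hcop : (u : ZMod N).val.Coprime d :=
    Nat.Coprime.coprime_dvd_right ⟨n, hn⟩ (ZMod.val_coe_unit_coprime u)
  set w := (u : ZMod N).val with hw
  have huw : (u : ZMod N) = (w : ZMod N) := by rw [hw, ZMod.natCast_zmod_val]
  have hcast : ∀ k : ℕ, (((w * k % d) * n : ℕ) : ZMod N) = ((w * k * n : ℕ) : ZMod N) := by
    intro k
    rw [ZMod.natCast_eq_natCast_iff]
    have := (Nat.mod_modEq (w * k) d).mul_right' n
    rwa [← hn] at this
  refine sum_bij (fun k _ => w * k % d) ?_ ?_ ?_ ?_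
  · intro k _
    exact mem_range.2 (Nat.mod_lt _ hdpos)
  · intro a ha b hb hab
    rw [mem_range] at ha hb
    have h2 : w * a ≡ w * b [MOD d] := hab
    have h3 := Nat.ModEq.cancel_left_of_coprime (Nat.Coprime.symm hcop) h2
    exact Nat.ModEq.eq_of_lt_of_lt h3 ha hb
  · have := Finset.surj_on_of_inj_on_of_card_le (s := range d) (t := range d) (fun k _ => w * k % d)
      (fun k _ => mem_range.2 (Nat.mod_lt _ hdpos)) (fun a b ha hb hab => by
        rw [mem_range] at ha hb
        have h2 : w * a ≡ w * b [MOD d] := hab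
        have h3 := Nat.ModEq.cancel_left_of_coprime (Nat.Coprime.symm hcop) h2
        exact Nat.ModEq.eq_of_lt_of_lt h3 ha hb) le_rfl
    intro b hb
    obtain ⟨a, ha, hab⟩ := this b hb
    exact ⟨a, ha, hab.symm⟩
  · intro k _
    congr 1
    rw [hcast, huw]
    push_cast; ring

lemma comp_bern_ne_zero {N : ℕ} [NeZero N] (χ : DirichletCharacter ℂ N) (ho : χ.Odd) :
    comp χ (fun a => ((bq ((a.val : ℚ) / N) : ℚ) : ℂ)) ((N / χ.conductor : ℕ) : ZMod N) ≠ 0 := by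
  have hN : N ≠ 0 := NeZero.ne N
  have hfN := χ.conductor_dvd_level
  haveI : NeZero χ.conductor := ⟨χ.conductor_ne_zero⟩
  set f := χ.conductor with hf
  set ψ : DirichletCharacter ℂ f := χ.primitiveCharacter with hψ
  have hψχ : ∀ u : (ZMod N)ˣ, χ u = ψ (ZMod.unitsMap hfN u : (ZMod f)ˣ) := by
    intro u
    have := DirichletCharacter.changeLevel_eq_cast_of_dvd χ.primitiveCharacter χ.conductor_dvd_level u
    rw [DirichletCharacter.changeLevel_primitiveCharacter] at this
    rw [this, ZMod.unitsMap_val]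
  have hψp : ψ.IsPrimitive := χ.primitiveCharacter_isPrimitive
  have hψo : ψ.Odd := by
    have h1 : χ (-1) = -1 := ho
    have h2 := hψχ (-1)
    rw [Units.val_neg, Units.val_one, h1] at h2
    rw [DirichletCharacter.Odd, h2]
    congr 1
    simp [ZMod.unitsMap_def]
  have hψip : ψ⁻¹.IsPrimitive := by
    rw [DirichletCharacter.isPrimitive_def, DirichletCharacter.conductor_inv]
    exact hψp
  have hψio : ψ⁻¹.Odd := by
    have h2 : ψ (-1) = -1 := hψo
    rw [DirichletCharacter.Odd, MulChar.inv_apply_eq_inv, h2]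
    rw [Ring.inverse_eq_inv']; norm_num
  have hne := bernoulli_ne_zero ψ⁻¹ hψip hψio
  set G : (ZMod f)ˣ → ℂ := fun t => ψ⁻¹ t * ((bq (((t : ZMod f).val : ℚ) / f) : ℚ) : ℂ) with hG
  have hsum1 : ∑ j : ZMod f, ψ⁻¹ j * ((bq ((j.val : ℚ) / f) : ℚ) : ℂ) = ∑ t : (ZMod f)ˣ, G t := by
    classical
    symm
    refine Finset.sum_of_injOn (fun t : (ZMod f)ˣ => (t : ZMod f)) ?_ ?_ ?_ ?_
    · intro a _ b _ h; exact Units.ext h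
    · intro a _; simp
    · intro j _ hj
      have : ¬ IsUnit j := by
        rintro ⟨t, rfl⟩
        apply hj
        simp
      rw [MulChar.map_nonunit _ this, zero_mul]
    · intro t _; rfl
  have hterm : ∀ u : (ZMod N)ˣ, χ ((u⁻¹ : (ZMod N)ˣ) : ZMod N) *
      ((bq ((((u : ZMod N) * ((N / f : ℕ) : ZMod N)).val : ℚ) / N) : ℚ) : ℂ) =
      G (ZMod.unitsMap hfN u) := by
    intro u
    simp only [hG]
    congr 1
    · rw [hψχ, map_inv, MulChar.inv_apply_eq_inv, Ring.inverse_eq_inv']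
      apply eq_inv_of_mul_eq_one_left
      rw [← map_mul, Units.inv_mul, map_one]
    · set c := ((ZMod.unitsMap hfN u : (ZMod f)ˣ) : ZMod f).val with hc
      have hfpos : 0 < f := Nat.pos_of_ne_zero (NeZero.ne f)
      have hclt : c < f := ZMod.val_lt _
      have h1 := unit_mul_eq hfN u c (by
        rw [hc, ZMod.natCast_zmod_val, ZMod.unitsMap_val, ZMod.natCast_val])
      rw [h1]
      obtain ⟨q, hq⟩ := hfN
      have hqpos : 0 < q := Nat.pos_of_ne_zero (by intro h; rw [h] at hq; simp at hq; exact hN hq)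
      have hNf : N / f = q := by rw [hq, Nat.mul_div_cancel_left _ hfpos]
      rw [hNf, ZMod.val_natCast_of_lt (by rw [hq]; exact Nat.mul_lt_mul_of_pos_right hclt hqpos)]
      congr 2
      have hNQ : (N : ℚ) = f * q := by rw [hq]; push_cast; rfl
      have : (0 : ℚ) < q := by exact_mod_cast hqpos
      have : (0 : ℚ) < f := by exact_mod_cast hfpos
      rw [hNQ]; push_cast; field_simp
  unfold comp
  rw [sum_congr rfl (fun u _ => hterm u)]
  classical
  have hfib : ∑ u : (ZMod N)ˣ, G (ZMod.unitsMap hfN u) =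
      (Finset.card {u : (ZMod N)ˣ | ZMod.unitsMap hfN u = 1} : ℂ) * ∑ t, G t := by
    rw [← Finset.sum_fiberwise Finset.univ (fun u => ZMod.unitsMap hfN u), mul_sum]
    refine sum_congr rfl fun t _ => ?_
    rw [sum_congr rfl (g := fun _ => G t) (fun u hu => by rw [(mem_filter.1 hu).2]), sum_const,
      nsmul_eq_mul]
    congr 2
    obtain ⟨v, hv⟩ := ZMod.unitsMap_surjective hfN t
    refine Finset.card_bij (fun u _ => u * v⁻¹) ?_ ?_ ?_
    · intro u hu
      simp only [mem_filter, mem_univ, true_and] at hu ⊢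
      rw [map_mul, map_inv, hu, hv, mul_inv_cancel]
    · intro a _ b _ h
      exact mul_right_cancel h
    · intro b hb
      simp only [mem_filter, mem_univ, true_and] at hb
      exact ⟨b * v, by simp [hb, hv], by simp⟩
  rw [hfib, ← hsum1]
  refine mul_ne_zero ?_ hne
  rw [Nat.cast_ne_zero, ← Nat.pos_iff_ne_zero, card_pos]
  exact ⟨1, by simp⟩

lemma coreC {N : ℕ} [NeZero N] {ι : Type*} [Fintype ι] (L : ZMod N → ℂ) (hL : IsDist N L)
    (hodd : ∀ a, L (-a) = - L a) (a : ι → ZMod N)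
    (hB : ∀ u : (ZMod N)ˣ, ∑ i, bq (((u * a i : ZMod N).val : ℚ) / N) = 0) :
    ∑ i, L (a i) = 0 := by
  have hχ : ∀ χ : DirichletCharacter ℂ N, ∑ i, comp χ L (a i) = 0 := by
    intro χ
    rcases χ.even_or_odd with he | ho
    · refine sum_eq_zero fun i _ => ?_
      have h1 := comp_eig χ L (-1) (a i)
      have h2 : χ (-1) = 1 := he
      rw [Units.val_neg, Units.val_one, h2, one_mul] at h1
      have h3 : comp χ L (-1 * a i) = - comp χ L (a i) := by
        unfold comp
        rw [← sum_neg_distrib]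
        refine sum_congr rfl fun u _ => ?_
        rw [neg_one_mul, mul_neg, hodd, mul_neg]
      rw [h3] at h1
      linear_combination (-1 / 2 : ℂ) * h1
    · set b : ZMod N → ℂ := fun a => ((bq ((a.val : ℚ) / N) : ℚ) : ℂ) with hb
      have hbd : IsDist N b := by
        have := isDist_of N bq (fun d hd y hy _ => bq_dist d hd y hy)
        intro d hd x
        have h2 := this d hd x
        beta_reduce at h2
        simp only [hb]
        rw [← h2]
        push_cast
        rfl
      set x0 : ZMod N := ((N / χ.conductor : ℕ) : ZMod N) with hx0
      have hb0 : comp χ b x0 ≠ 0 := comp_bern_ne_zero χ ho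
      have hz := eigen_zero χ (fun a => comp χ b x0 * comp χ L a - comp χ L x0 * comp χ b a) ?_ ?_ ?_
      · have h1 : ∑ i, comp χ b (a i) = 0 := by
          unfold comp
          rw [sum_comm]
          refine sum_eq_zero fun u _ => ?_
          rw [← mul_sum]
          have := hB u
          have h2 : ∑ i, b (u * a i) = 0 := by
            simp only [hb]
            exact_mod_cast congrArg (fun q : ℚ => (q : ℂ)) this
          rw [h2, mul_zero]
        have h2 : comp χ b x0 * ∑ i, comp χ L (a i) = comp χ L x0 * ∑ i, comp χ b (a i) := by
          rw [mul_sum, mul_sum]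
          exact sum_congr rfl fun i _ => sub_eq_zero.1 (hz (a i))
        rw [h1, mul_zero] at h2
        exact (mul_eq_zero.1 h2).resolve_left hb0
      · intro d hd x
        have h1 := comp_dist χ L hL d hd x
        have h2 := comp_dist χ b hbd d hd x
        simp only [sum_sub_distrib, ← mul_sum]
        rw [h1, h2]
      · intro u y
        simp only [comp_eig]
        ring
      · ring
  have htot : ∀ y, ∑ χ : DirichletCharacter ℂ N, comp χ L y = (N.totient : ℂ) * L y := by
    intro y
    unfold comp
    rw [sum_comm]
    simp only [← sum_mul]
    rw [Finset.sum_eq_single (1 : (ZMod N)ˣ)]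
    · rw [DirichletCharacter.sum_characters_eq]; simp
    · intro u _ hu
      rw [DirichletCharacter.sum_characters_eq, if_neg, zero_mul]
      intro h
      apply hu
      have : u⁻¹ = 1 := Units.ext h
      simpa using this
    · simp
  have hfin : (N.totient : ℂ) * ∑ i, L (a i) = 0 := by
    rw [mul_sum]
    simp only [← htot]
    rw [sum_comm]
    exact sum_eq_zero fun χ _ => hχ χ
  refine (mul_eq_zero.1 hfin).resolve_left ?_
  rw [← ne_eq, Nat.cast_ne_zero, ← Nat.pos_iff_ne_zero, Nat.totient_pos]
  exact Nat.pos_of_ne_zero (NeZero.ne N)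

lemma core {N : ℕ} [NeZero N] {ι : Type*} [Fintype ι] {W : Type*} [AddCommGroup W] [Module ℚ W]
    (L : ZMod N → W) (hL : IsDist N L)
    (hodd : ∀ a, L (-a) = - L a) (a : ι → ZMod N)
    (hB : ∀ u : (ZMod N)ˣ, ∑ i, bq (((u * a i : ZMod N).val : ℚ) / N) = 0) :
    ∑ i, L (a i) = 0 := by
  rw [← Module.forall_dual_apply_eq_zero_iff ℚ]
  intro φ
  have := coreC (fun x => ((φ (L x) : ℚ) : ℂ)) ?_ ?_ a hB
  · rw [map_sum]; exact_mod_cast this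
  · intro d hd x
    have h := congrArg φ (hL d hd x)
    rw [map_sum] at h
    simp only
    rw [← h]; push_cast; rfl
  · intro x
    simp [hodd]

end KO

theorem stmt14 (N : ℕ) (hN : 1 ≤ N) (r : Fin 4 → ℚ)
    (hden : ∀ i, ∃ m : ℤ, r i = m / N)
    (hsum : ∃ m : ℤ, r 0 + r 1 + r 2 + r 3 = m)
    (hint : ∀ i, ∀ n : ℤ, r i ≠ n)
    (h : ∀ s : ℤ, Int.gcd s N = 1 →
      Int.fract (s * r 0) + Int.fract (s * r 1) + Int.fract (s * r 2)
        + Int.fract (s * r 3) = 2) :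
    IsAlgebraic ℚ
      ((Real.Gamma (Int.fract (r 0) : ℚ) * Real.Gamma (Int.fract (r 1) : ℚ)
        * Real.Gamma (Int.fract (r 2) : ℚ) * Real.Gamma (Int.fract (r 3) : ℚ))
          / Real.pi ^ 2) := by
  haveI : NeZero N := ⟨by omega⟩
  have hNQ : (0 : ℚ) < N := by exact_mod_cast hN
  choose m hm using hden
  have hfr : ∀ (s : ℤ) i, Int.fract (s * r i) = ((((s * m i : ℤ) : ZMod N).val : ℕ) : ℚ) / N := by
    intro s i
    rw [hm]
    have h1 : ((((s * m i : ℤ) : ZMod N).val : ℕ) : ℤ) = (s * m i) % N := ZMod.val_intCast _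
    have h2 : ((((s * m i : ℤ) : ZMod N).val : ℕ) : ℚ) = (((s * m i) % N : ℤ) : ℚ) := by
      rw [← h1]; simp
    rw [h2]
    rw [Int.fract_eq_iff]
    have hmod := Int.emod_add_mul_ediv (s * m i) N
    refine ⟨?_, ?_, (s * m i) / N, ?_⟩
    · apply div_nonneg _ hNQ.le
      exact_mod_cast Int.emod_nonneg _ (by omega)
    · rw [div_lt_one hNQ]
      exact_mod_cast Int.emod_lt_of_pos (s * m i) (by omega)
    · have h4 : (((s * m i) % N : ℤ) : ℚ) + N * (((s * m i) / N : ℤ) : ℚ) = s * m i := by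
        exact_mod_cast hmod
      field_simp
      linarith
  set a : Fin 4 → ZMod N := fun i => ((m i : ℤ) : ZMod N) with ha
  have hfr1 : ∀ i, Int.fract (r i) = ((a i).val : ℚ) / N := by
    intro i
    have := hfr 1 i
    simpa [ha] using this
  have ha0 : ∀ i, a i ≠ 0 := by
    intro i h0
    have h1 := hfr1 i
    rw [h0] at h1
    simp at h1
    have h2 := Int.floor_add_fract (r i)
    rw [h1, add_zero] at h2
    exact hint i _ h2.symm
  have hB : ∀ u : (ZMod N)ˣ, ∑ i, KO.bq (((u * a i : ZMod N).val : ℚ) / N) = 0 := by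
    intro u
    have h1 := h ((u : ZMod N).val : ℤ) (by
      rw [Int.gcd_natCast_natCast]
      exact ZMod.val_coe_unit_coprime u)
    have h2 : ∀ i, Int.fract ((((u : ZMod N).val : ℤ) : ℚ) * r i) = ((u * a i : ZMod N).val : ℚ) / N := by
      intro i
      rw [hfr]
      congr 3
      simp [ha]
    have h3 : ∀ i, KO.bq (((u * a i : ZMod N).val : ℚ) / N) =
        ((u * a i : ZMod N).val : ℚ) / N - 1 / 2 := by
      intro i
      rw [KO.bq, if_neg]
      apply div_ne_zero _ hNQ.ne'
      rw [Nat.cast_ne_zero, Ne, ZMod.val_eq_zero]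
      intro h0
      exact ha0 i ((Units.mul_right_eq_zero u).1 h0)
    rw [h2, h2, h2, h2] at h1
    simp only [h3, Fin.sum_univ_four]
    linarith
  set L : ZMod N → ℝ ⧸ KO.S := fun x => KO.S.mkQ (KO.lg ((x.val : ℚ) / N)) with hL
  have hLd : KO.IsDist N L := by
    refine KO.isDist_of N (fun q => KO.S.mkQ (KO.lg q)) (fun d hd y hy _ => ?_)
    rw [← map_sum, ← sub_eq_zero, ← map_sub, Submodule.mkQ_apply, Submodule.Quotient.mk_eq_zero]
    exact KO.lg_dist d hd y hy
  have hLodd : ∀ x, L (-x) = - L x := by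
    intro x
    by_cases hx : x = 0
    · simp [hx, hL, KO.lg]
    · rw [eq_neg_iff_add_eq_zero, add_comm]
      simp only [hL]
      rw [← map_add, Submodule.mkQ_apply, Submodule.Quotient.mk_eq_zero, ZMod.neg_val, if_neg hx,
        Nat.cast_sub (ZMod.val_lt x).le, sub_div, div_self hNQ.ne']
      apply KO.lg_reflect
      · apply div_pos _ hNQ
        exact_mod_cast ZMod.val_pos.2 hx
      · rw [div_lt_one hNQ]
        exact_mod_cast ZMod.val_lt x
  have hcore := KO.core L hLd hLodd a hB
  simp only [hL, ← map_sum] at hcore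
  rw [Submodule.mkQ_apply, Submodule.Quotient.mk_eq_zero, KO.mem_S] at hcore
  simp only [← hfr1, Fin.sum_univ_four] at hcore
  have hpos : ∀ i, 0 < Int.fract (r i) := by
    intro i
    rw [hfr1]
    apply div_pos _ hNQ
    exact_mod_cast ZMod.val_pos.2 (ha0 i)
  have hG : ∀ i, 0 < Real.Gamma ((Int.fract (r i) : ℚ) : ℝ) := by
    intro i
    apply Real.Gamma_pos_of_pos
    exact_mod_cast hpos i
  have hlg : ∀ i, KO.lg (Int.fract (r i)) =
      Real.log (Real.Gamma ((Int.fract (r i) : ℚ) : ℝ)) - (1 / 2) * Real.log Real.pi := by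
    intro i
    rw [KO.lg, if_neg (hpos i).ne']
  convert! hcore using 1
  rw [hlg, hlg, hlg, hlg]
  rw [← Real.exp_log (div_pos (mul_pos (mul_pos (mul_pos (hG 0) (hG 1)) (hG 2)) (hG 3))
    (pow_pos Real.pi_pos 2))]
  congr 1
  rw [Real.log_div (mul_pos (mul_pos (mul_pos (hG 0) (hG 1)) (hG 2)) (hG 3)).ne'
    (pow_pos Real.pi_pos 2).ne', Real.log_mul (mul_pos (mul_pos (hG 0) (hG 1)) (hG 2)).ne' (hG 3).ne',
    Real.log_mul (mul_pos (hG 0) (hG 1)).ne' (hG 2).ne', Real.log_mul (hG 0).ne' (hG 1).ne',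
    Real.log_pow]
  push_cast
  ring
end
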